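/- Let V_1, …, V_n be H-modules, each finite-dimensional over F and indecomposable, and suppose every indecomposable H-module that is finite-dimensional over F is isomorphic to some V_i. Then for all m, s : Fin n → ℕ and every H-linear map f : V^(s) → V^(m), there exist t : Fin n → ℕ and an injective H-linear map k : V^(t) → V^(s) whose range equals the kernel of f. -/

import Mathlib

/-- An `H`-module `M` is indecomposable if it is nonzero and whenever `p` and `q` are
complementary submodules, one of them is trivial. -/
def IsIndecomposableModule (H : Type*) [Ring H] (M : Type*) [AddCommGroup M]
    [Module H M] : Prop :=
  (∃ x : M, x ≠ 0) ∧
    ∀ p q : Submodule H M, p ⊓ q = ⊥ → p ⊔ q = ⊤ → p = ⊥ ∨ q = ⊥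

/-- Products of a family of modules along two indexings that differ by a bijection are
isomorphic. -/
theorem nonempty_linearEquiv_pi_of_equiv {H α ι κ : Type*} [Ring H] {V : α → Type*}
    [∀ i, AddCommGroup (V i)] [∀ i, Module H (V i)] {c : ι → α} {d : κ → α}
    (e : κ ≃ ι) (h : ∀ j, c (e j) = d j) :
    Nonempty ((∀ j, V (c j)) ≃ₗ[H] ∀ j, V (d j)) := by
  obtain rfl : (fun j => c (e j)) = d := funext h
  exact ⟨(LinearEquiv.piCongrLeft H (fun j => V (c j)) e).symm⟩

/-- If every finite-dimensional indecomposable module is isomorphic to a member of `V`, then every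
finite-dimensional module is isomorphic to a finite product of members of `V`. -/
theorem exists_nonempty_linearEquiv_pi.{u} (F : Type*) [Field F] (H : Type*) [Ring H]
    [Algebra F H] {α : Type*} (V : α → Type u) [∀ i, AddCommGroup (V i)] [∀ i, Module H (V i)]
    (hall : ∀ (W : Type u) [AddCommGroup W] [Module H W] [Module F W]
      [IsScalarTower F H W] [FiniteDimensional F W],
      IsIndecomposableModule H W → ∃ i : α, Nonempty (W ≃ₗ[H] V i))
    (W : Type u) [AddCommGroup W] [Module H W] [Module F W] [IsScalarTower F H W]
    [FiniteDimensional F W] :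
    ∃ (ι : Type) (_ : Finite ι) (c : ι → α), Nonempty (W ≃ₗ[H] ∀ j, V (c j)) := by
  induction hd : Module.finrank F W using Nat.strong_induction_on generalizing W with
  | _ d ih =>
  subst hd
  by_cases hW : IsIndecomposableModule H W
  · obtain ⟨i, ⟨e⟩⟩ := hall W hW
    exact ⟨Unit, inferInstance, fun _ => i, ⟨e.trans (LinearEquiv.funUnique Unit H (V i)).symm⟩⟩
  by_cases h0 : ∃ x : W, x ≠ 0
  · obtain ⟨p, q, hinf, hsup, hp, hq⟩ : ∃ p q : Submodule H W,
        p ⊓ q = ⊥ ∧ p ⊔ q = ⊤ ∧ p ≠ ⊥ ∧ q ≠ ⊥ := by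
      by_contra! hcon
      exact hW ⟨h0, fun p q h₁ h₂ => or_iff_not_imp_left.2 (hcon p q h₁ h₂)⟩
    have hpq : IsCompl p q := IsCompl.of_eq hinf hsup
    let e := Submodule.prodEquivOfIsCompl p q hpq
    have : FiniteDimensional F p :=
      inferInstanceAs (FiniteDimensional F (p.restrictScalars F))
    have : FiniteDimensional F q :=
      inferInstanceAs (FiniteDimensional F (q.restrictScalars F))
    have hrank : Module.finrank F p + Module.finrank F q = Module.finrank F W := by
      rw [← (e.restrictScalars F).finrank_eq, Module.finrank_prod]
    have := Submodule.nontrivial_iff_ne_bot.2 hp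
    have := Submodule.nontrivial_iff_ne_bot.2 hq
    have hp0 : 0 < Module.finrank F p := Module.finrank_pos
    have hq0 : 0 < Module.finrank F q := Module.finrank_pos
    obtain ⟨ι, _, c, ⟨ep⟩⟩ := ih (Module.finrank F p) (by omega) p rfl
    obtain ⟨κ, _, d, ⟨eq⟩⟩ := ih (Module.finrank F q) (by omega) q rfl
    exact ⟨ι ⊕ κ, inferInstance, Sum.elim c d, ⟨e.symm.trans ((ep.prodCongr eq).trans
      (LinearEquiv.sumPiEquivProdPi H ι κ fun j => V (Sum.elim c d j)).symm)⟩⟩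
  · push Not at h0
    have : Subsingleton W := subsingleton_of_forall_eq 0 h0
    exact ⟨Empty, inferInstance, Empty.elim, ⟨LinearEquiv.ofSubsingleton _ _⟩⟩

theorem stmt9.{u} (F : Type*) [Field F] (H : Type*) [Ring H] [Algebra F H]
    (n : ℕ) (V : Fin n → Type u)
    [∀ i, AddCommGroup (V i)] [∀ i, Module H (V i)]
    [∀ i, Module F (V i)] [∀ i, IsScalarTower F H (V i)]
    [∀ i, FiniteDimensional F (V i)]
    (hind : ∀ i, IsIndecomposableModule H (V i))
    (hall : ∀ (W : Type u) [AddCommGroup W] [Module H W] [Module F W]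
      [IsScalarTower F H W] [FiniteDimensional F W],
      IsIndecomposableModule H W → ∃ i : Fin n, Nonempty (W ≃ₗ[H] V i))
    (m s : Fin n → ℕ)
    (f : (DirectSum (Σ i : Fin n, Fin (s i)) fun p => V p.1) →ₗ[H]
      (DirectSum (Σ i : Fin n, Fin (m i)) fun p => V p.1)) :
    ∃ (t : Fin n → ℕ)
      (k : (DirectSum (Σ i : Fin n, Fin (t i)) fun p => V p.1) →ₗ[H]
        (DirectSum (Σ i : Fin n, Fin (s i)) fun p => V p.1)),
      Function.Injective k ∧ LinearMap.range k = LinearMap.ker f := by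
  classical
  have : FiniteDimensional F (LinearMap.ker f) :=
    inferInstanceAs (FiniteDimensional F ((LinearMap.ker f).restrictScalars F))
  obtain ⟨ι, _, c, ⟨e⟩⟩ := exists_nonempty_linearEquiv_pi F H V hall (LinearMap.ker f)
  let t : Fin n → ℕ := fun i => Nat.card {j // c j = i}
  let σ : (Σ i : Fin n, Fin (t i)) ≃ ι :=
    (Equiv.sigmaCongrRight fun i => (Finite.equivFin {j // c j = i}).symm).trans
      (Equiv.sigmaFiberEquiv c)
  obtain ⟨e'⟩ := nonempty_linearEquiv_pi_of_equiv (H := H) (V := V) (c := c)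
    (d := fun p : Σ i : Fin n, Fin (t i) => p.1) σ
    fun p => ((Finite.equivFin {j // c j = p.1}).symm p.2).2
  let g := (DirectSum.linearEquivFunOnFintype H (Σ i : Fin n, Fin (t i)) fun p => V p.1).trans
    (e.trans e').symm
  refine ⟨t, (LinearMap.ker f).subtype ∘ₗ g.toLinearMap,
    (LinearMap.ker f).injective_subtype.comp g.injective, ?_⟩
  rw [LinearMap.range_comp_of_range_eq_top _ g.range, Submodule.range_subtype]
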